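/- Let F be a field, f ∈ F[x] nonconstant with f' ≠ 0, t transcendental over F, α a root of φ = f − t, L the splitting field of φ over F(t), and G = Gal(L/F(t)) acting on the root set Z of φ. Let φ = ∏_{i=1}^r ψ_i be the factorization of φ into monic irreducible factors over F(α), with ψ_1 = x − α. Let β ∈ Z be a root of φ not lying in F(α), let σ ∈ G with σ(α) = β, and set ψ*_i = σ(ψ_i) for 1 ≤ i ≤ r (so the ψ*_i are the monic irreducible factors of φ over F(β)). Form the bipartite graph Γ_β whose vertices are ψ_1,…,ψ_r, ψ*_1,…,ψ*_r, with an undirected edge between ψ_i and ψ*_j if and only if gcd(ψ_i, ψ*_j) ≠ 1. Let C_β be the set of all roots of those ψ_i that are connected to ψ_1 in Γ_β. Then the orbit of α under the subgroup generated by G_α and G_β equals C_β. -/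

import Mathlib

/-!
Since `L` is a splitting field, it is normal over `K = F(t)` and over `K(α)`. Hence the stabilizer
`G_α` permutes the roots of each irreducible factor `ψ_i` transitively
(`exists_algEquiv_of_common_root`): its orbits on the root set are the root sets of the `ψ_i`.
Conjugating by `σ`, the orbits of `G_β` are the root sets of the `ψ*_k`
(`exists_algEquiv_of_common_root_conj`). As `L` splits everything, `ψ_i` and `ψ*_k` fail to be
coprime exactly when they have a common root in `L`, that is, when the corresponding orbits meet.
So moving alternately with elements of `G_α` and `G_β` is the same as walking in `Γ_β`: the set
`C_β` is stable under both stabilizers, and by induction along a walk each of its points is reached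
from `α`.

Only normality enters, so the argument is carried out for an arbitrary normal extension `L / K`
and an arbitrary polynomial `p` over `K`, without any separability.
-/

open Polynomial

/-- For `f ∈ F[x]`, the polynomial `φ = f − t` over the rational function field
`F(t) = RatFunc F` (with `t = RatFunc.X`). -/
noncomputable abbrev polyPhi {F : Type*} [Field F] (f : F[X]) : Polynomial (RatFunc F) :=
  f.map (algebraMap F (RatFunc F)) - Polynomial.C RatFunc.X

section General

variable {K L : Type*} [Field K] [Field L] [Algebra K L]

/-- The stabilizer of `α` acts transitively on the roots of a monic irreducible polynomial over
`K(α)`. -/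
theorem exists_algEquiv_of_common_root [Normal K L] (α : L)
    (q : Polynomial (IntermediateField.adjoin K {α})) (hm : q.Monic) (hq : Irreducible q)
    (γ δ : L) (hγ : aeval γ q = 0) (hδ : aeval δ q = 0) :
    ∃ ρ : L ≃ₐ[K] L, ρ α = α ∧ ρ γ = δ := by
  have h : minpoly (IntermediateField.adjoin K {α}) δ
      = minpoly (IntermediateField.adjoin K {α}) γ := by
    rw [← minpoly.eq_of_irreducible_of_monic hq hγ hm,
      ← minpoly.eq_of_irreducible_of_monic hq hδ hm]
  obtain ⟨g, hg⟩ := (Normal.minpoly_eq_iff_mem_orbit L).1 h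
  refine ⟨AlgEquiv.restrictScalars K g, ?_, hg⟩
  exact g.commutes ⟨α, IntermediateField.mem_adjoin_simple_self K α⟩

/-- An automorphism fixing `α` permutes the roots of every polynomial over `K(α)`. -/
theorem aeval_apply_eq_zero_of_fixes (α : L) (τ : L ≃ₐ[K] L) (hτ : τ α = α)
    (q : Polynomial (IntermediateField.adjoin K {α})) (γ : L) (h : aeval γ q = 0) :
    aeval (τ γ) q = 0 := by
  have hτE : (τ : L →+* L).comp (algebraMap (IntermediateField.adjoin K {α}) L)
      = algebraMap (IntermediateField.adjoin K {α}) L := by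
    ext x
    have hle : IntermediateField.adjoin K {α} ≤
        IntermediateField.fixedField (Subgroup.zpowers τ) := by
      rw [IntermediateField.adjoin_simple_le_iff, IntermediateField.mem_fixedField_iff]
      intro g hg
      have hs : Subgroup.zpowers τ ≤ MulAction.stabilizer (L ≃ₐ[K] L) α := by
        rw [Subgroup.zpowers_le]
        exact hτ
      exact hs hg
    exact (IntermediateField.mem_fixedField_iff _ _).1 (hle x.2) τ (Subgroup.mem_zpowers τ)
  have h2 := Polynomial.hom_eval₂ q (algebraMap _ L) (τ : L →+* L) γ
  rw [hτE, ← aeval_def, h, map_zero] at h2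
  exact h2.symm

/-- Evaluating the conjugate `σ(q)` at `γ` amounts to evaluating `q` at `σ⁻¹ γ`. -/
theorem eval_conj_eq_zero_iff {E : IntermediateField K L} (σ : L ≃ₐ[K] L)
    (q : Polynomial E) (γ : L) :
    (q.map ((σ : L →+* L).comp (algebraMap E L))).eval γ = 0 ↔ aeval (σ.symm γ) q = 0 := by
  have h : (q.map ((σ : L →+* L).comp (algebraMap E L))).eval γ = σ (aeval (σ.symm γ) q) := by
    have h2 := Polynomial.hom_eval₂ q (algebraMap E L) (σ : L →+* L) (σ.symm γ)
    rw [eval_map, aeval_def]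
    simpa using h2.symm
  rw [h, map_eq_zero_iff _ σ.injective]

/-- The stabilizer of `σ α` acts transitively on the roots of `σ(q)`, for `q` monic irreducible
over `K(α)`. -/
theorem exists_algEquiv_of_common_root_conj [Normal K L] (α : L) (σ : L ≃ₐ[K] L)
    (q : Polynomial (IntermediateField.adjoin K {α})) (hm : q.Monic) (hq : Irreducible q)
    (γ δ : L) (hγ : aeval (σ.symm γ) q = 0) (hδ : aeval (σ.symm δ) q = 0) :
    ∃ ρ : L ≃ₐ[K] L, ρ (σ α) = σ α ∧ ρ γ = δ := by
  obtain ⟨ρ, h1, h2⟩ := exists_algEquiv_of_common_root α q hm hq _ _ hγ hδ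
  refine ⟨(σ.symm.trans ρ).trans σ, ?_, ?_⟩
  · simp [h1]
  · simp [h2]

/-- Over a field where `p` splits, `p` and `q` fail to be coprime iff they have a common root. -/
theorem not_isCoprime_iff_common_root {p q : L[X]} (hp : p.Splits) (hp0 : p ≠ 0) :
    ¬ IsCoprime p q ↔ ∃ γ, p.eval γ = 0 ∧ q.eval γ = 0 := by
  classical
  constructor
  · intro h
    have hg : ¬ IsUnit (EuclideanDomain.gcd p q) := fun hu =>
      h (EuclideanDomain.gcd_isUnit_iff.1 hu)
    have hgp := EuclideanDomain.gcd_dvd_left p q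
    have hs : (EuclideanDomain.gcd p q).Splits := hp.of_dvd hp0 hgp
    have hg0 : EuclideanDomain.gcd p q ≠ 0 := ne_zero_of_dvd_ne_zero hp0 hgp
    obtain ⟨γ, hγ⟩ := hs.exists_eval_eq_zero
      (fun hd => hg (Polynomial.isUnit_iff_degree_eq_zero.2 hd))
    exact ⟨γ, eval_eq_zero_of_dvd_of_eval_eq_zero hgp hγ,
      eval_eq_zero_of_dvd_of_eval_eq_zero (EuclideanDomain.gcd_dvd_right p q) hγ⟩
  · rintro ⟨γ, h1, h2⟩ ⟨a, b, hab⟩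
    have := congrArg (eval γ) hab
    simp [h1, h2] at this

/-- The orbit description for an arbitrary polynomial `p` over `K` that splits in the normal
extension `L`. -/
theorem orbit_eq_connected_roots_of_normal [Normal K L] (p : K[X])
    (hsplit : (p.map (algebraMap K L)).Splits) (α : L) (r : ℕ) (i₀ : Fin r)
    (ψ : Fin r → Polynomial (IntermediateField.adjoin K {α}))
    (hmonic : ∀ i, (ψ i).Monic) (hirr : ∀ i, Irreducible (ψ i))
    (hfact : p.map (algebraMap K (IntermediateField.adjoin K {α})) = ∏ i, ψ i)
    (hψ0 : ψ i₀ = X - C ⟨α, IntermediateField.mem_adjoin_simple_self K α⟩)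
    (σ : L ≃ₐ[K] L) (Rel : Fin r → Fin r → Prop)
    (hRel : ∀ i j, Rel i j ↔ ∃ k : Fin r,
      ¬ IsCoprime ((ψ i).map (algebraMap (IntermediateField.adjoin K {α}) L))
        ((ψ k).map ((σ : L →+* L).comp (algebraMap (IntermediateField.adjoin K {α}) L))) ∧
      ¬ IsCoprime ((ψ j).map (algebraMap (IntermediateField.adjoin K {α}) L))
        ((ψ k).map ((σ : L →+* L).comp (algebraMap (IntermediateField.adjoin K {α}) L)))) :
    {γ : L | ∃ τ ∈ Subgroup.closure ({ρ : L ≃ₐ[K] L | ρ α = α} ∪ {ρ | ρ (σ α) = σ α}),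
        τ α = γ} = {γ | ∃ i : Fin r, Relation.ReflTransGen Rel i₀ i ∧ aeval γ (ψ i) = 0} := by
  have hmap : p.map (algebraMap K L) =
      (∏ i, ψ i).map (algebraMap (IntermediateField.adjoin K {α}) L) := by
    rw [← hfact, Polynomial.map_map, ← IsScalarTower.algebraMap_eq]
  have hroot : ∀ γ : L, aeval γ p = 0 ↔ ∃ i, aeval γ (ψ i) = 0 := by
    intro γ
    have h1 : aeval γ p = aeval γ (∏ i, ψ i) := by
      rw [← hfact, aeval_map_algebraMap]
    rw [h1, map_prod, Finset.prod_eq_zero_iff]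
    simp
  have hspl : ∀ i, ((ψ i).map (algebraMap (IntermediateField.adjoin K {α}) L)).Splits := by
    intro i
    refine hsplit.of_dvd ?_ ?_
    · rw [hmap]
      exact ((monic_prod_of_monic _ _ fun i _ => hmonic i).map _).ne_zero
    · rw [hmap]
      exact Polynomial.map_dvd _ (Finset.dvd_prod_of_mem ψ (Finset.mem_univ i))
  have hedge : ∀ i k, ¬ IsCoprime ((ψ i).map (algebraMap (IntermediateField.adjoin K {α}) L))
        ((ψ k).map ((σ : L →+* L).comp
          (algebraMap (IntermediateField.adjoin K {α}) L))) ↔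
      ∃ γ : L, aeval γ (ψ i) = 0 ∧ aeval (σ.symm γ) (ψ k) = 0 := by
    intro i k
    rw [not_isCoprime_iff_common_root (hspl i) ((hmonic i).map _).ne_zero]
    simp only [eval_conj_eq_zero_iff, eval_map_algebraMap]
  have hR : ∀ i j, Rel i j ↔ ∃ k,
      (∃ γ : L, aeval γ (ψ i) = 0 ∧ aeval (σ.symm γ) (ψ k) = 0) ∧
      (∃ γ : L, aeval γ (ψ j) = 0 ∧ aeval (σ.symm γ) (ψ k) = 0) := by
    intro i j
    simp only [hRel, hedge]
  have hα0 : ∀ γ : L, aeval γ (ψ i₀) = 0 ↔ γ = α := by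
    intro γ
    rw [hψ0, map_sub, aeval_X, aeval_C, sub_eq_zero]
    rfl
  have hfix : ∀ (τ : L ≃ₐ[K] L) (γ : L), aeval γ p = 0 → aeval (τ γ) p = 0 := by
    intro τ γ h
    have := Polynomial.aeval_algHom_apply τ γ p
    rw [h, map_zero] at this
    exact this
  -- A step by an element of `G_α` stays within the roots of one `ψ_i`; a step by an element of
  -- `G_β` stays within the roots of one `ψ*_k`.
  have hstepα : ∀ (τ : L ≃ₐ[K] L), τ α = α → ∀ γ i, aeval γ (ψ i) = 0 →
      aeval (τ γ) (ψ i) = 0 := by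
    intro τ hτ γ i h
    exact aeval_apply_eq_zero_of_fixes α τ hτ (ψ i) γ h
  have hstepβ : ∀ (τ : L ≃ₐ[K] L), τ (σ α) = σ α → ∀ γ k, aeval (σ.symm γ) (ψ k) = 0 →
      aeval (σ.symm (τ γ)) (ψ k) = 0 := by
    intro τ hτ γ k h
    have := hstepα ((σ.trans τ).trans σ.symm) (by simp [hτ]) _ k h
    simpa using this
  have hstep : ∀ τ ∈ ({ρ : L ≃ₐ[K] L | ρ α = α} ∪ {ρ | ρ (σ α) = σ α}), ∀ γ : L,
      (∃ i, Relation.ReflTransGen Rel i₀ i ∧ aeval γ (ψ i) = 0) →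
      ∃ i, Relation.ReflTransGen Rel i₀ i ∧ aeval (τ γ) (ψ i) = 0 := by
    rintro τ (hτ | hτ) γ ⟨i, hi, hγ⟩
    · exact ⟨i, hi, hstepα τ hτ γ i hγ⟩
    · have hγp := (hroot γ).2 ⟨i, hγ⟩
      obtain ⟨k, hk⟩ := (hroot _).1 (hfix σ.symm γ hγp)
      obtain ⟨j, hj⟩ := (hroot _).1 (hfix τ γ hγp)
      exact ⟨j, hi.tail ((hR i j).2 ⟨k, ⟨γ, hγ, hk⟩, τ γ, hj, hstepβ τ hτ γ k hk⟩), hj⟩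
  ext γ
  simp only [Set.mem_ofPred_eq]
  constructor
  · rintro ⟨τ, hτ, rfl⟩
    induction hτ using Subgroup.closure_induction_left with
    | one => exact ⟨i₀, .refl, (hα0 _).2 rfl⟩
    | mul_left x hx y _ ih =>
      exact hstep x hx _ ih
    | inv_mul_cancel x hx y _ ih =>
      refine hstep x⁻¹ ?_ _ ih
      rcases hx with hx | hx
      · exact Or.inl ((AlgEquiv.symm_apply_eq x).2 hx.symm)
      · exact Or.inr ((AlgEquiv.symm_apply_eq x).2 hx.symm)
  · rintro ⟨i, hi, hγ⟩
    induction hi generalizing γ with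
    | refl =>
      rw [(hα0 γ).1 hγ]
      exact ⟨1, one_mem _, rfl⟩
    | @tail i j _ hij ih =>
      obtain ⟨k, ⟨δ, hδi, hδk⟩, ⟨ε, hεj, hεk⟩⟩ := (hR i j).1 hij
      obtain ⟨τ, hτ, hτδ⟩ := ih δ hδi
      obtain ⟨ρ, hρ, hρδ⟩ := exists_algEquiv_of_common_root_conj α σ (ψ k) (hmonic k) (hirr k)
        δ ε hδk hεk
      obtain ⟨κ, hκ, hκε⟩ := exists_algEquiv_of_common_root α (ψ j) (hmonic j) (hirr j) ε γ hεj hγ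
      refine ⟨κ * (ρ * τ), mul_mem (Subgroup.subset_closure (Or.inl hκ))
        (mul_mem (Subgroup.subset_closure (Or.inr hρ)) hτ), ?_⟩
      simp [hτδ, hρδ, hκε]

end General

set_option synthInstance.maxHeartbeats 1000000 in
/-- **Proposition.** Let `φ = f − t`, `L` its splitting field over `F(t)`,
`G = Gal(L/F(t))`, `α` a root of `φ`, and `φ = ∏_{i=1}^r ψ_i` the factorization of `φ`
into monic irreducible factors over `F(α)` with `ψ_1 = x − α`.  Let `β` be a root of `φ`
not in `F(α)`, `σ ∈ G` with `σ(α) = β`, and `ψ*_i = σ(ψ_i)` (the irreducible factors of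
`φ` over `F(β)`).  Form the bipartite graph `Γ_β` on the `ψ_i` and `ψ*_j` with an edge
between `ψ_i` and `ψ*_j` iff `gcd(ψ_i, ψ*_j) ≠ 1` (i.e. they are not coprime), and let
`C_β` be the set of roots of those `ψ_i` connected to `ψ_1` in `Γ_β`.  Then the orbit of
`α` under the subgroup generated by `G_α` and `G_β` equals `C_β`.
(Connectivity of `ψ_i` to `ψ_1` is expressed through the reflexive-transitive closure of
the relation "`ψ_i` and `ψ_j` have a common neighbour `ψ*_k`".) -/
theorem orbit_of_two_stabilizers_eq_connected_roots
    {F : Type*} [Field F] (f : F[X]) (hf : 0 < f.natDegree) (hf' : derivative f ≠ 0)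
    (α : (polyPhi f).SplittingField) (hα : aeval α (polyPhi f) = 0)
    (r : ℕ) (hr : 0 < r)
    (ψ : Fin r → Polynomial (IntermediateField.adjoin (RatFunc F) {α}))
    (hmonic : ∀ i, (ψ i).Monic) (hirr : ∀ i, Irreducible (ψ i))
    (hfact : (polyPhi f).map
        (algebraMap (RatFunc F) (IntermediateField.adjoin (RatFunc F) {α}))
      = ∏ i, ψ i)
    (hψ0 : ψ ⟨0, hr⟩ =
      X - C ⟨α, IntermediateField.mem_adjoin_simple_self (RatFunc F) α⟩)
    (β : (polyPhi f).SplittingField) (hβ : aeval β (polyPhi f) = 0)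
    (hβnot : β ∉ IntermediateField.adjoin (RatFunc F) {α})
    (σ : (polyPhi f).SplittingField ≃ₐ[RatFunc F] (polyPhi f).SplittingField)
    (hσ : σ α = β)
    (ψstar : Fin r → Polynomial (polyPhi f).SplittingField)
    (hψstar : ∀ i, ψstar i = (ψ i).map
      ((σ : (polyPhi f).SplittingField →+* (polyPhi f).SplittingField).comp
        (algebraMap (IntermediateField.adjoin (RatFunc F) {α})
          (polyPhi f).SplittingField)))
    -- the adjacency relation of `Γ_β`, restricted to pairs `(ψ_i, ψ_j)` with a common
    -- neighbour `ψ*_k`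
    (Rel : Fin r → Fin r → Prop)
    (hRel : Rel = fun i j => ∃ k : Fin r,
      ¬ IsCoprime ((ψ i).map (algebraMap (IntermediateField.adjoin (RatFunc F) {α})
          (polyPhi f).SplittingField)) (ψstar k) ∧
      ¬ IsCoprime ((ψ j).map (algebraMap (IntermediateField.adjoin (RatFunc F) {α})
          (polyPhi f).SplittingField)) (ψstar k))
    -- `C_β`: the roots of the `ψ_i` connected to `ψ_1` in `Γ_β`
    (Cβ : Set (polyPhi f).SplittingField)
    (hCβ : Cβ = {γ | ∃ i : Fin r, Relation.ReflTransGen Rel ⟨0, hr⟩ i ∧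
      aeval γ (ψ i) = 0}) :
    {γ : (polyPhi f).SplittingField |
      ∃ τ ∈ Subgroup.closure
        ({ρ : (polyPhi f).SplittingField ≃ₐ[RatFunc F] (polyPhi f).SplittingField |
            ρ α = α} ∪ {ρ | ρ β = β}),
        τ α = γ} = Cβ := by
  subst hCβ hRel hσ
  obtain rfl : ψstar = _ := funext hψstar
  have : Normal (RatFunc F) (polyPhi f).SplittingField := Normal.of_isSplittingField (polyPhi f)
  exact orbit_eq_connected_roots_of_normal (polyPhi f) (SplittingField.splits _) α r ⟨0, hr⟩ ψ
    hmonic hirr hfact hψ0 σ _ (fun _ _ => Iff.rfl)
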